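/- Let T be a ℂ-linear map on the n×n complex matrices and let T† be its adjoint with respect to the Hilbert–Schmidt inner product ⟨A, B⟩ = Tr(Aᴴ B). Let C : ℕ → Matrix be a family of Hermitian matrices such that Tr(C(m+s) · T^m(ρ)) = Tr(C(s) · ρ) for every density matrix ρ and all m, s ∈ ℕ. Then C(s) = (T†)^m(C(m+s)) for all m, s ∈ ℕ; that is, every constant of motion is a reversed-time trajectory of the Heisenberg-picture dynamics. -/

import Mathlib

open Matrix ComplexOrder

open scoped Matrix.Norms.L2Operator MatrixOrder in
theorem eq_zero_of_trace_density {n : ℕ} (D : Matrix (Fin n) (Fin n) ℂ)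
    (h : ∀ ρ : Matrix (Fin n) (Fin n) ℂ, ρ.PosSemidef → ρ.trace = 1 → (D * ρ).trace = 0) :
    D = 0 := by
  have h1 : ∀ X : Matrix (Fin n) (Fin n) ℂ, X.PosSemidef → (D * X).trace = 0 := by
    intro X hX
    by_cases h0 : X.trace = 0
    · rw [hX.trace_eq_zero_iff.1 h0]; simp
    · have h2 := h (X.trace⁻¹ • X) (hX.smul (inv_nonneg.2 hX.trace_nonneg))
        (by simp [h0])
      simpa [h0] using h2
  have h2 : ∀ X : Matrix (Fin n) (Fin n) ℂ, (D * X).trace = 0 := by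
    intro X
    have hX : X ∈ Submodule.span ℂ {a : Matrix (Fin n) (Fin n) ℂ | 0 ≤ a} := by
      rw [CStarAlgebra.span_nonneg]; trivial
    induction hX using Submodule.span_induction with
    | mem x hx => exact h1 x (Matrix.nonneg_iff_posSemidef.1 hx)
    | zero => simp
    | add x y _ _ hx hy => simp [mul_add, hx, hy]
    | smul c x _ hx => simp [hx]
  exact Matrix.trace_mul_conjTranspose_self_eq_zero_iff.1 (h2 Dᴴ)

theorem iterate_adj {n : ℕ}
    (T Tdag : Matrix (Fin n) (Fin n) ℂ →ₗ[ℂ] Matrix (Fin n) (Fin n) ℂ)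
    (hadj : ∀ A B : Matrix (Fin n) (Fin n) ℂ,
      ((Tdag A)ᴴ * B).trace = (Aᴴ * T B).trace) (m : ℕ) :
    ∀ A B : Matrix (Fin n) (Fin n) ℂ,
      (((⇑Tdag)^[m] A)ᴴ * B).trace = (Aᴴ * (⇑T)^[m] B).trace := by
  induction m with
  | zero => simp
  | succ k ih =>
    intro A B
    rw [Function.iterate_succ_apply, ih, hadj, ← Function.iterate_succ_apply' (⇑T)]

/-- **Constants of motion are reversed-time Heisenberg trajectories.**
Let `T` be linear with Hilbert–Schmidt adjoint `T†` (so that `Tr((T† A)ᴴ * B) = Tr(Aᴴ * T B)`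
for all `A`, `B`).  If `C : ℕ → Matrix` is a family of Hermitian matrices with
`Tr (C (m+s) * T^[m] ρ) = Tr (C s * ρ)` for every density matrix `ρ`, then
`C s = (T†)^[m] (C (m+s))` for all `m, s`. -/
theorem constant_of_motion_is_heisenberg_trajectory {n : ℕ}
    (T Tdag : Matrix (Fin n) (Fin n) ℂ →ₗ[ℂ] Matrix (Fin n) (Fin n) ℂ)
    (hadj : ∀ A B : Matrix (Fin n) (Fin n) ℂ,
      ((Tdag A)ᴴ * B).trace = (Aᴴ * T B).trace)
    (C : ℕ → Matrix (Fin n) (Fin n) ℂ)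
    (hherm : ∀ m : ℕ, (C m).IsHermitian)
    (hcom : ∀ (ρ : Matrix (Fin n) (Fin n) ℂ), ρ.PosSemidef → ρ.trace = 1 →
      ∀ m s : ℕ, (C (m + s) * (⇑T)^[m] ρ).trace = (C s * ρ).trace) :
    ∀ m s : ℕ, C s = (⇑Tdag)^[m] (C (m + s)) := by
  intro m s
  have key : C s - ((⇑Tdag)^[m] (C (m + s)))ᴴ = 0 := by
    apply eq_zero_of_trace_density
    intro ρ h1 h2
    rw [sub_mul, trace_sub, iterate_adj T Tdag hadj, (hherm (m + s)).eq, hcom ρ h1 h2, sub_self]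
  have h := congrArg conjTranspose (sub_eq_zero.1 key)
  rwa [conjTranspose_conjTranspose, (hherm s).eq] at h
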